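/- Let S be a right group. For every s ∈ S there exists a unique idempotent f ∈ E(S) such that s·f = s; denoting this element π_E(s), the resulting map π_E: S → E(S) is a surjective semigroup morphism from S onto the right zero semigroup E(S). -/

import Mathlib

/-!
In a left cancellative semigroup, `s * f = s` gives `s * (f * f) = s * f`, so a right identity `f`
of a single element `s` is automatically idempotent, and it is unique. Idempotents are left
identities, so they form a right zero semigroup. As a right identity of `t` is also one of `s * t`,
the projection satisfies `π (s * t) = π t = π s * π t`, and it fixes every idempotent.
-/

theorem eq_of_mul_eq_left_of_isIdempotentElem {M : Type*} [Mul M] [IsLeftCancelMul M] {e f : M}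
    (he : IsIdempotentElem e) (hf : e * f = e) : f = e :=
  mul_left_cancel (hf.trans he.eq.symm)

section LeftCancelSemigroup

variable {S : Type*} [Semigroup S] [IsLeftCancelMul S]

theorem mul_eq_right_of_isIdempotentElem {e : S} (he : IsIdempotentElem e) (x : S) : e * x = x :=
  mul_left_cancel (a := e) <| by rw [← mul_assoc, he.eq]

theorem isIdempotentElem_of_mul_eq_left {s f : S} (hf : s * f = s) : IsIdempotentElem f :=
  mul_left_cancel (a := s) <| by rw [← mul_assoc, hf, hf]

theorem existsUnique_isIdempotentElem_mul_eq_left {s : S} (hs : ∃ f, s * f = s) :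
    ∃! f : S, IsIdempotentElem f ∧ s * f = s := by
  obtain ⟨f, hf⟩ := hs
  exact ⟨f, ⟨isIdempotentElem_of_mul_eq_left hf, hf⟩,
    fun _ hg ↦ mul_left_cancel (hg.2.trans hf.symm)⟩

theorem map_mul_of_mul_map_eq_left {π : S → S} (hπ : ∀ s, s * π s = s) (s t : S) :
    π (s * t) = π s * π t := by
  have map_mul_eq_right : π (s * t) = π t :=
    mul_left_cancel (a := s * t) <| by rw [hπ, mul_assoc, hπ]
  have map_idem : IsIdempotentElem (π s) := isIdempotentElem_of_mul_eq_left (hπ s)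
  rw [map_mul_eq_right, mul_eq_right_of_isIdempotentElem map_idem]

end LeftCancelSemigroup

theorem stmt_5_general (S : Type*) [Semigroup S] [IsLeftCancelMul S]
    (hS : ∀ s : S, ∃ x : S, s * x = s) :
    (∀ s : S, ∃! f : S, f * f = f ∧ s * f = s) ∧
    ∀ πE : S → S, (∀ s : S, πE s * πE s = πE s ∧ s * πE s = s) →
      (∀ s t : S, πE (s * t) = πE s * πE t) ∧
      (∀ s t : S, πE s * πE t = πE t) ∧
      (∀ e : S, e * e = e → ∃ s : S, πE s = e) := by
  refine ⟨fun s ↦ existsUnique_isIdempotentElem_mul_eq_left (hS s), fun πE hπ ↦ ?_⟩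
  have mul_map (s : S) : s * πE s = s := (hπ s).2
  exact ⟨map_mul_of_mul_map_eq_left mul_map,
    fun s t ↦ mul_eq_right_of_isIdempotentElem (hπ s).1 (πE t),
    fun e he ↦ ⟨e, eq_of_mul_eq_left_of_isIdempotentElem he (mul_map e)⟩⟩

/-- The projection `π_E`: in a right group `S`, for every `s` there is a unique
idempotent `f` with `s·f = s`; the resulting map `π_E : S → E(S)` is a surjective
semigroup morphism onto the right zero semigroup `E(S)`. -/
theorem stmt_5 (S : Type*) [Semigroup S] [Nonempty S]
    (hrs : ∀ a b : S, ∃ x : S, a * x = b)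
    (hlc : ∀ a b c : S, a * b = a * c → b = c) :
    (∀ s : S, ∃! f : S, f * f = f ∧ s * f = s) ∧
    ∀ πE : S → S, (∀ s : S, πE s * πE s = πE s ∧ s * πE s = s) →
      -- πE is a semigroup morphism
      (∀ s t : S, πE (s * t) = πE s * πE t) ∧
      -- its image lies in the right zero semigroup E(S)
      (∀ s t : S, πE s * πE t = πE t) ∧
      -- πE is surjective onto E(S)
      (∀ e : S, e * e = e → ∃ s : S, πE s = e) := by
  have : IsLeftCancelMul S := ⟨fun a b c ↦ hlc a b c⟩
  exact stmt_5_general S fun s ↦ hrs s s
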